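/- (Bottom of the ascent for k = 3) In the Cholesky setting, (1/10)Tr(𝛉⁵) = ∂( (1/2)Tr(θ₁³θ₂ + θ₁θ₂³ + (1/2)(θ₁θ₂)²) ). -/

import Mathlib

/-- An abstract model of the Dolbeault double complex of `(p,q)`-forms on a complex
manifold: a bigraded associative `ℂ`-algebra `Ω = ⨁ Ω^{p,q}`, graded-commutative with
respect to total degree, with `ℂ`-linear operators `∂` (`pd`) and `∂̄` (`pdb`) of
bidegrees `(1,0)` and `(0,1)`, squaring to zero and anticommuting, satisfying the
graded Leibniz rule. -/
structure DolbeaultAlgebra (Ω : Type*) [Ring Ω] [Algebra ℂ Ω] where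
  /-- the `ℂ`-subspace of elements of bidegree `(p,q)` -/
  deg : ℕ → ℕ → Submodule ℂ Ω
  one_mem : (1 : Ω) ∈ deg 0 0
  mul_mem : ∀ {p q p' q'} {a b : Ω}, a ∈ deg p q → b ∈ deg p' q' →
    a * b ∈ deg (p + p') (q + q')
  gcomm : ∀ {p q p' q'} (a b : Ω), a ∈ deg p q → b ∈ deg p' q' →
    a * b = ((-1 : ℂ) ^ ((p + q) * (p' + q'))) • (b * a)
  /-- the operator `∂` -/
  pd : Ω →ₗ[ℂ] Ω
  /-- the operator `∂̄` -/
  pdb : Ω →ₗ[ℂ] Ω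
  pd_mem : ∀ {p q} {a : Ω}, a ∈ deg p q → pd a ∈ deg (p + 1) q
  pdb_mem : ∀ {p q} {a : Ω}, a ∈ deg p q → pdb a ∈ deg p (q + 1)
  pd_pd : ∀ a : Ω, pd (pd a) = 0
  pdb_pdb : ∀ a : Ω, pdb (pdb a) = 0
  pd_pdb : ∀ a : Ω, pd (pdb a) + pdb (pd a) = 0
  pd_leibniz : ∀ {p q} (a b : Ω), a ∈ deg p q →
    pd (a * b) = pd a * b + ((-1 : ℂ) ^ (p + q)) • (a * pd b)
  pdb_leibniz : ∀ {p q} (a b : Ω), a ∈ deg p q →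
    pdb (a * b) = pdb a * b + ((-1 : ℂ) ^ (p + q)) • (a * pdb b)

namespace DolbeaultAlgebra

variable {Ω : Type*} [Ring Ω] [Algebra ℂ Ω] {r : ℕ}

/-- the entrywise extension of `∂` to `r × r` matrices over `Ω` -/
def mpd (A : DolbeaultAlgebra Ω) (M : Matrix (Fin r) (Fin r) Ω) :
    Matrix (Fin r) (Fin r) Ω := M.map A.pd

/-- the entrywise extension of `∂̄` to `r × r` matrices over `Ω` -/
def mpdb (A : DolbeaultAlgebra Ω) (M : Matrix (Fin r) (Fin r) Ω) :
    Matrix (Fin r) (Fin r) Ω := M.map A.pdb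

/-- the assertion that all entries of a matrix lie in `Ω^{p,q}` -/
def MatDeg (A : DolbeaultAlgebra Ω) (p q : ℕ) (M : Matrix (Fin r) (Fin r) Ω) : Prop :=
  ∀ i j, M i j ∈ A.deg p q

end DolbeaultAlgebra

variable {Ω : Type*} [Ring Ω] [Algebra ℂ Ω]

namespace DolbeaultAlgebra

variable {Ω : Type*} [Ring Ω] [Algebra ℂ Ω] {r : ℕ}

theorem matDeg_mul (A : DolbeaultAlgebra Ω) {p q p' q' : ℕ} {M N : Matrix (Fin r) (Fin r) Ω}
    (hM : A.MatDeg p q M) (hN : A.MatDeg p' q' N) : A.MatDeg (p + p') (q + q') (M * N) := by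
  intro i j
  rw [Matrix.mul_apply]
  exact Submodule.sum_mem _ fun k _ => A.mul_mem (hM i k) (hN k j)

theorem matDeg_add (A : DolbeaultAlgebra Ω) {p q : ℕ} {M N : Matrix (Fin r) (Fin r) Ω}
    (hM : A.MatDeg p q M) (hN : A.MatDeg p q N) : A.MatDeg p q (M + N) :=
  fun i j => Submodule.add_mem _ (hM i j) (hN i j)

theorem matDeg_mpd (A : DolbeaultAlgebra Ω) {p q : ℕ} {M : Matrix (Fin r) (Fin r) Ω}
    (hM : A.MatDeg p q M) : A.MatDeg (p + 1) q (A.mpd M) :=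
  fun i j => A.pd_mem (hM i j)

theorem mpd_mul (A : DolbeaultAlgebra Ω) {p q : ℕ} {M : Matrix (Fin r) (Fin r) Ω}
    (hM : A.MatDeg p q M) (N : Matrix (Fin r) (Fin r) Ω) :
    A.mpd (M * N) = A.mpd M * N + ((-1 : ℂ) ^ (p + q)) • (M * A.mpd N) := by
  ext i j
  simp only [mpd, Matrix.map_apply, Matrix.mul_apply, Matrix.add_apply, Matrix.smul_apply,
    map_sum, Finset.smul_sum, ← Finset.sum_add_distrib]
  exact Finset.sum_congr rfl fun k _ => A.pd_leibniz _ _ (hM i k)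

theorem mpd_mpd (A : DolbeaultAlgebra Ω) (M : Matrix (Fin r) (Fin r) Ω) :
    A.mpd (A.mpd M) = 0 := by
  ext i j
  simp [mpd, A.pd_pd]

theorem pd_one (A : DolbeaultAlgebra Ω) : A.pd 1 = 0 := by
  have h := A.pd_leibniz 1 1 A.one_mem
  simpa using h

theorem mpd_one (A : DolbeaultAlgebra Ω) :
    A.mpd (1 : Matrix (Fin r) (Fin r) Ω) = 0 := by
  ext i j
  by_cases hij : i = j
  · subst hij
    simp [mpd, A.pd_one]
  · simp [mpd, hij]

theorem pd_trace (A : DolbeaultAlgebra Ω) (M : Matrix (Fin r) (Fin r) Ω) :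
    A.pd (Matrix.trace M) = Matrix.trace (A.mpd M) := by
  simp [Matrix.trace, mpd, map_sum]

theorem trace_comm (A : DolbeaultAlgebra Ω) {p q p' q' : ℕ} {M N : Matrix (Fin r) (Fin r) Ω}
    (hM : A.MatDeg p q M) (hN : A.MatDeg p' q' N) (he : Even ((p + q) * (p' + q'))) :
    Matrix.trace (M * N) = Matrix.trace (N * M) := by
  simp only [Matrix.trace, Matrix.diag_apply, Matrix.mul_apply]
  rw [Finset.sum_comm]
  refine Finset.sum_congr rfl fun i _ => Finset.sum_congr rfl fun j _ => ?_
  rw [A.gcomm _ _ (hM j i) (hN i j), he.neg_one_pow, one_smul]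

theorem trace_rot (A : DolbeaultAlgebra Ω) {a b c d e : Matrix (Fin r) (Fin r) Ω}
    (ha : A.MatDeg 1 0 a) (hb : A.MatDeg 1 0 b) (hc : A.MatDeg 1 0 c) (hd : A.MatDeg 1 0 d)
    (he : A.MatDeg 1 0 e) :
    Matrix.trace (a * b * c * d * e) = Matrix.trace (b * c * d * e * a) := by
  have h := A.trace_comm ha (A.matDeg_mul (A.matDeg_mul (A.matDeg_mul hb hc) hd) he) (by decide)
  simpa only [mul_assoc] using h

theorem sq_zero (A : DolbeaultAlgebra Ω) {a : Ω} (ha : a ∈ A.deg 1 0) : a * a = 0 := by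
  have h := A.gcomm a a ha ha
  norm_num at h
  have h2 : (2 : ℂ) • (a * a) = 0 := by
    rw [two_smul]
    nth_rewrite 1 [h]
    simp
  exact (smul_eq_zero.mp h2).resolve_left two_ne_zero

theorem lower_mul {M N : Matrix (Fin r) (Fin r) Ω} (hM : ∀ i j, i < j → M i j = 0)
    (hN : ∀ i j, i < j → N i j = 0) :
    (∀ i j, i < j → (M * N) i j = 0) ∧ ∀ i, (M * N) i i = M i i * N i i := by
  constructor
  · intro i j hij
    rw [Matrix.mul_apply]
    refine Finset.sum_eq_zero fun k _ => ?_
    rcases lt_or_ge i k with hk | hk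
    · rw [hM i k hk, zero_mul]
    · rw [hN k j (lt_of_le_of_lt hk hij), mul_zero]
  · intro i
    rw [Matrix.mul_apply]
    refine Finset.sum_eq_single i (fun k _ hk => ?_) (by simp)
    rcases lt_or_gt_of_ne hk with hk | hk
    · rw [hN k i hk, mul_zero]
    · rw [hM i k hk, zero_mul]

theorem upper_mul {M N : Matrix (Fin r) (Fin r) Ω} (hM : ∀ i j, j ≤ i → M i j = 0)
    (hN : ∀ i j, j < i → N i j = 0) : ∀ i j, j ≤ i → (M * N) i j = 0 := by
  intro i j hij
  rw [Matrix.mul_apply]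
  refine Finset.sum_eq_zero fun k _ => ?_
  rcases le_or_gt k i with hk | hk
  · rw [hM i k hk, zero_mul]
  · rw [hN k j (lt_of_le_of_lt hij hk), mul_zero]

theorem upper_inv {b binv : Matrix (Fin r) (Fin r) Ω}
    (hbu : ∀ i j : Fin r, j < i → b i j = 0) (hbd : ∀ i : Fin r, b i i = 1)
    (hbinvr : b * binv = 1) : ∀ i j, j < i → binv i j = 0 := by
  intro i
  induction i using WellFoundedGT.induction with
  | ind i ih =>
    intro j hij
    have h := congrFun (congrFun hbinvr i) j
    rw [Matrix.mul_apply, Matrix.one_apply_ne hij.ne', Finset.sum_eq_single i, hbd, one_mul] at h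
    · exact h
    · intro k _ hk
      rcases lt_or_gt_of_ne hk with hk | hk
      · rw [hbu i k hk, zero_mul]
      · rw [ih k hk j (hij.trans hk), mul_zero]
    · simp

theorem lower_inv (A : DolbeaultAlgebra Ω) {c cinv : Matrix (Fin r) (Fin r) Ω}
    (hcdeg : A.MatDeg 0 0 c) (hcinvdeg : A.MatDeg 0 0 cinv)
    (hcl : ∀ i j : Fin r, i < j → c i j = 0)
    (hcinvr : c * cinv = 1) : ∀ i j, i < j → cinv i j = 0 := by
  intro i
  induction i using WellFoundedLT.induction with
  | ind i ih =>
    have key : ∀ j, i ≤ j → c i i * cinv i j = (1 : Matrix (Fin r) (Fin r) Ω) i j := by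
      intro j hij
      rw [← hcinvr, Matrix.mul_apply]
      symm
      refine Finset.sum_eq_single i (fun k _ hk => ?_) (by simp)
      rcases lt_or_gt_of_ne hk with hk | hk
      · rw [ih k hk j (lt_of_lt_of_le hk hij), mul_zero]
      · rw [hcl i k hk, zero_mul]
    intro j hij
    have h1 : cinv i i * c i i = 1 := by
      have := A.gcomm _ _ (hcdeg i i) (hcinvdeg i i)
      rw [key i le_rfl] at this
      simpa using this.symm
    have h2 := key j hij.le
    rw [Matrix.one_apply_ne hij.ne] at h2
    calc cinv i j = cinv i i * c i i * cinv i j := by rw [h1, one_mul]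
      _ = 0 := by rw [mul_assoc, h2, mul_zero]

end DolbeaultAlgebra

/-- (Bottom of the ascent for `k = 3`) In the Cholesky setting,
`(1/10)Tr(Bθ⁵) = ∂((1/2)Tr(θ₁³θ₂ + θ₁θ₂³ + (1/2)(θ₁θ₂)²))`. -/
theorem stmt17
    (A : DolbeaultAlgebra Ω) (r : ℕ) (hr : 1 ≤ r)
    (b c binv cinv : Matrix (Fin r) (Fin r) Ω)
    (hbdeg : A.MatDeg 0 0 b) (hcdeg : A.MatDeg 0 0 c)
    (hbinvdeg : A.MatDeg 0 0 binv) (hcinvdeg : A.MatDeg 0 0 cinv)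
    (hbu : ∀ i j : Fin r, j < i → b i j = 0) (hbd : ∀ i : Fin r, b i i = 1)
    (hcl : ∀ i j : Fin r, i < j → c i j = 0)
    (hbinvl : binv * b = 1) (hbinvr : b * binv = 1)
    (hcinvl : cinv * c = 1) (hcinvr : c * cinv = 1)
    (h hinv : Matrix (Fin r) (Fin r) Ω) (hh : h = c * b) (hhinv : hinv = binv * cinv)
    (θ₁ θ₂ θ θb₁ θb₂ θb : Matrix (Fin r) (Fin r) Ω)
    (hθ₁ : θ₁ = A.mpd b * binv) (hθ₂ : θ₂ = cinv * A.mpd c) (hθ : θ = θ₁ + θ₂)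
    (hθb₁ : θb₁ = A.mpdb b * binv) (hθb₂ : θb₂ = cinv * A.mpdb c) (hθb : θb = θb₁ + θb₂)
    (Bθ Bθb BΘ : Matrix (Fin r) (Fin r) Ω)
    (hBθ : Bθ = hinv * A.mpd h) (hBθb : Bθb = hinv * A.mpdb h) (hBΘ : BΘ = A.mpdb Bθ) :
    (1 / 10 : ℂ) • Matrix.trace (Bθ ^ 5) =
      A.pd ((1 / 2 : ℂ) • Matrix.trace
        (θ₁ ^ 3 * θ₂ + θ₁ * θ₂ ^ 3 + (1 / 2 : ℂ) • (θ₁ * θ₂) ^ 2)) := by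
  have dx : A.MatDeg 1 0 θ₁ := by
    rw [hθ₁]; exact A.matDeg_mul (A.matDeg_mpd hbdeg) hbinvdeg
  have dy : A.MatDeg 1 0 θ₂ := by
    rw [hθ₂]; exact A.matDeg_mul hcinvdeg (A.matDeg_mpd hcdeg)
  -- the connection form is conjugate to the sum
  have hB : Bθ = binv * (θ₁ + θ₂) * b := by
    rw [hBθ, hhinv, hh, A.mpd_mul hcdeg, hθ₁, hθ₂]
    simp only [add_zero, pow_zero, one_smul, mul_add, add_mul]
    rw [add_comm]
    congr 1
    · calc binv * cinv * (c * A.mpd b) = binv * (cinv * c) * A.mpd b := by noncomm_ring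
        _ = binv * A.mpd b * (binv * b) := by rw [hcinvl, hbinvl]; noncomm_ring
        _ = _ := by noncomm_ring
    · noncomm_ring
  have hpow : ∀ n : ℕ, Bθ ^ n = binv * (θ₁ + θ₂) ^ n * b := by
    intro n
    induction n with
    | zero => simp [hbinvl]
    | succ n ih =>
      rw [pow_succ, ih, hB, pow_succ]
      calc _ = binv * (θ₁ + θ₂) ^ n * (b * binv) * (θ₁ + θ₂) * b := by noncomm_ring
        _ = _ := by rw [hbinvr]; noncomm_ring
  have dz : A.MatDeg 1 0 (θ₁ + θ₂) := A.matDeg_add dx dy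
  have htr : Matrix.trace (Bθ ^ 5) = Matrix.trace ((θ₁ + θ₂) ^ 5) := by
    have d5 : A.MatDeg 5 0 ((θ₁ + θ₂) ^ 5) := by
      simp only [pow_succ, pow_zero, one_mul]
      exact A.matDeg_mul (A.matDeg_mul (A.matDeg_mul (A.matDeg_mul dz dz) dz) dz) dz
    rw [hpow, mul_assoc, A.trace_comm hbinvdeg (A.matDeg_mul d5 hbdeg) (by decide), mul_assoc,
      hbinvr, mul_one]
  -- structure equations
  have sx : A.mpd θ₁ = θ₁ * θ₁ := by
    have h1 := A.mpd_mul hbdeg binv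
    rw [hbinvr, A.mpd_one] at h1
    simp only [add_zero, pow_zero, one_smul] at h1
    have h2 : A.mpd binv = - (binv * (A.mpd b * binv)) := by
      have h3 : b * A.mpd binv = - (A.mpd b * binv) := (neg_eq_of_add_eq_zero_right h1.symm).symm
      calc A.mpd binv = binv * b * A.mpd binv := by rw [hbinvl, one_mul]
        _ = _ := by rw [mul_assoc, h3, mul_neg]
    rw [hθ₁, A.mpd_mul (A.matDeg_mpd hbdeg), A.mpd_mpd, h2]
    simp [mul_assoc]
  have sy : A.mpd θ₂ = - (θ₂ * θ₂) := by
    have h1 := A.mpd_mul hcinvdeg c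
    rw [hcinvl, A.mpd_one] at h1
    simp only [add_zero, pow_zero, one_smul] at h1
    have h2 : A.mpd cinv = - (cinv * A.mpd c * cinv) := by
      have h3 : A.mpd cinv * c = - (cinv * A.mpd c) := (neg_eq_of_add_eq_zero_left h1.symm).symm
      calc A.mpd cinv = A.mpd cinv * (c * cinv) := by rw [hcinvr, mul_one]
        _ = _ := by rw [← mul_assoc, h3, neg_mul]
    rw [hθ₂, A.mpd_mul hcinvdeg, A.mpd_mpd, h2]
    simp [mul_assoc]
  -- vanishing of the pure powers
  have ux : ∀ i j : Fin r, j ≤ i → θ₁ i j = 0 := by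
    rw [hθ₁]
    refine DolbeaultAlgebra.upper_mul (fun i j hij => ?_)
      (DolbeaultAlgebra.upper_inv hbu hbd hbinvr)
    rcases hij.eq_or_lt with hij | hij
    · subst hij
      simp [DolbeaultAlgebra.mpd, hbd, A.pd_one]
    · simp [DolbeaultAlgebra.mpd, hbu i j hij]
  have ly : ∀ i j : Fin r, i < j → θ₂ i j = 0 := by
    rw [hθ₂]
    refine (DolbeaultAlgebra.lower_mul (A.lower_inv hcdeg hcinvdeg hcl hcinvr)
      (fun i j hij => ?_)).1
    simp [DolbeaultAlgebra.mpd, hcl i j hij]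
  have tx : Matrix.trace (θ₁ * θ₁ * θ₁ * θ₁ * θ₁) = 0 := by
    have ux' : ∀ i j : Fin r, j < i → θ₁ i j = 0 := fun i j hij => ux i j hij.le
    have u5 := DolbeaultAlgebra.upper_mul (DolbeaultAlgebra.upper_mul
      (DolbeaultAlgebra.upper_mul (DolbeaultAlgebra.upper_mul ux ux') ux') ux') ux'
    exact Finset.sum_eq_zero fun i _ => u5 i i le_rfl
  have ty : Matrix.trace (θ₂ * θ₂ * θ₂ * θ₂ * θ₂) = 0 := by
    have l2 := DolbeaultAlgebra.lower_mul ly ly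
    have l3 := DolbeaultAlgebra.lower_mul l2.1 ly
    have l4 := DolbeaultAlgebra.lower_mul l3.1 ly
    have l5 := DolbeaultAlgebra.lower_mul l4.1 ly
    refine Finset.sum_eq_zero fun i _ => ?_
    rw [Matrix.diag_apply, l5.2, l4.2, l3.2, l2.2, A.sq_zero (dy i i)]
    simp
  -- the derivative
  have mpd_lin : ∀ (k : ℂ) (M N P : Matrix (Fin r) (Fin r) Ω),
      A.mpd (M + N + k • P) = A.mpd M + A.mpd N + k • A.mpd P := by
    intro k M N P
    ext i j
    simp [DolbeaultAlgebra.mpd]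
  -- cyclic rotations
  have e_yxxxx : Matrix.trace (θ₂ * θ₁ * θ₁ * θ₁ * θ₁) =
      Matrix.trace (θ₁ * θ₁ * θ₁ * θ₁ * θ₂) :=
    A.trace_rot dy dx dx dx dx
  have e_yxxxy : Matrix.trace (θ₂ * θ₁ * θ₁ * θ₁ * θ₂) =
      Matrix.trace (θ₁ * θ₁ * θ₁ * θ₂ * θ₂) :=
    A.trace_rot dy dx dx dx dy
  have e_yxxyx : Matrix.trace (θ₂ * θ₁ * θ₁ * θ₂ * θ₁) =
      Matrix.trace (θ₁ * θ₁ * θ₂ * θ₁ * θ₂) :=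
    A.trace_rot dy dx dx dy dx
  have e_yxxyy : Matrix.trace (θ₂ * θ₁ * θ₁ * θ₂ * θ₂) =
      Matrix.trace (θ₁ * θ₁ * θ₂ * θ₂ * θ₂) :=
    A.trace_rot dy dx dx dy dy
  have e_yxyxy : Matrix.trace (θ₂ * θ₁ * θ₂ * θ₁ * θ₂) =
      Matrix.trace (θ₁ * θ₂ * θ₁ * θ₂ * θ₂) :=
    A.trace_rot dy dx dy dx dy
  have e_yxyyy : Matrix.trace (θ₂ * θ₁ * θ₂ * θ₂ * θ₂) =
      Matrix.trace (θ₁ * θ₂ * θ₂ * θ₂ * θ₂) :=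
    A.trace_rot dy dx dy dy dy
  have e_xyxxx : Matrix.trace (θ₁ * θ₂ * θ₁ * θ₁ * θ₁) =
      Matrix.trace (θ₁ * θ₁ * θ₁ * θ₁ * θ₂) :=
    (A.trace_rot dx dy dx dx dx).trans e_yxxxx
  have e_xyxxy : Matrix.trace (θ₁ * θ₂ * θ₁ * θ₁ * θ₂) =
      Matrix.trace (θ₁ * θ₁ * θ₂ * θ₁ * θ₂) :=
    (A.trace_rot dx dy dx dx dy).trans e_yxxyx
  have e_yyxxx : Matrix.trace (θ₂ * θ₂ * θ₁ * θ₁ * θ₁) =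
      Matrix.trace (θ₁ * θ₁ * θ₁ * θ₂ * θ₂) :=
    (A.trace_rot dy dy dx dx dx).trans e_yxxxy
  have e_yyxxy : Matrix.trace (θ₂ * θ₂ * θ₁ * θ₁ * θ₂) =
      Matrix.trace (θ₁ * θ₁ * θ₂ * θ₂ * θ₂) :=
    (A.trace_rot dy dy dx dx dy).trans e_yxxyy
  have e_yyxyx : Matrix.trace (θ₂ * θ₂ * θ₁ * θ₂ * θ₁) =
      Matrix.trace (θ₁ * θ₂ * θ₁ * θ₂ * θ₂) :=
    (A.trace_rot dy dy dx dy dx).trans e_yxyxy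
  have e_yyxyy : Matrix.trace (θ₂ * θ₂ * θ₁ * θ₂ * θ₂) =
      Matrix.trace (θ₁ * θ₂ * θ₂ * θ₂ * θ₂) :=
    (A.trace_rot dy dy dx dy dy).trans e_yxyyy
  have e_xxyxx : Matrix.trace (θ₁ * θ₁ * θ₂ * θ₁ * θ₁) =
      Matrix.trace (θ₁ * θ₁ * θ₁ * θ₁ * θ₂) :=
    (A.trace_rot dx dx dy dx dx).trans e_xyxxx
  have e_xyyxx : Matrix.trace (θ₁ * θ₂ * θ₂ * θ₁ * θ₁) =
      Matrix.trace (θ₁ * θ₁ * θ₁ * θ₂ * θ₂) :=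
    (A.trace_rot dx dy dy dx dx).trans e_yyxxx
  have e_xyyxy : Matrix.trace (θ₁ * θ₂ * θ₂ * θ₁ * θ₂) =
      Matrix.trace (θ₁ * θ₂ * θ₁ * θ₂ * θ₂) :=
    (A.trace_rot dx dy dy dx dy).trans e_yyxyx
  have e_yxyxx : Matrix.trace (θ₂ * θ₁ * θ₂ * θ₁ * θ₁) =
      Matrix.trace (θ₁ * θ₁ * θ₂ * θ₁ * θ₂) :=
    (A.trace_rot dy dx dy dx dx).trans e_xyxxy
  have e_yyyxx : Matrix.trace (θ₂ * θ₂ * θ₂ * θ₁ * θ₁) =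
      Matrix.trace (θ₁ * θ₁ * θ₂ * θ₂ * θ₂) :=
    (A.trace_rot dy dy dy dx dx).trans e_yyxxy
  have e_yyyxy : Matrix.trace (θ₂ * θ₂ * θ₂ * θ₁ * θ₂) =
      Matrix.trace (θ₁ * θ₂ * θ₂ * θ₂ * θ₂) :=
    (A.trace_rot dy dy dy dx dy).trans e_yyxyy
  have e_xxxyx : Matrix.trace (θ₁ * θ₁ * θ₁ * θ₂ * θ₁) =
      Matrix.trace (θ₁ * θ₁ * θ₁ * θ₁ * θ₂) :=
    (A.trace_rot dx dx dx dy dx).trans e_xxyxx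
  have e_xxyyx : Matrix.trace (θ₁ * θ₁ * θ₂ * θ₂ * θ₁) =
      Matrix.trace (θ₁ * θ₁ * θ₁ * θ₂ * θ₂) :=
    (A.trace_rot dx dx dy dy dx).trans e_xyyxx
  have e_xyxyx : Matrix.trace (θ₁ * θ₂ * θ₁ * θ₂ * θ₁) =
      Matrix.trace (θ₁ * θ₁ * θ₂ * θ₁ * θ₂) :=
    (A.trace_rot dx dy dx dy dx).trans e_yxyxx
  have e_xyyyx : Matrix.trace (θ₁ * θ₂ * θ₂ * θ₂ * θ₁) =
      Matrix.trace (θ₁ * θ₁ * θ₂ * θ₂ * θ₂) :=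
    (A.trace_rot dx dy dy dy dx).trans e_yyyxx
  have e_yxyyx : Matrix.trace (θ₂ * θ₁ * θ₂ * θ₂ * θ₁) =
      Matrix.trace (θ₁ * θ₂ * θ₁ * θ₂ * θ₂) :=
    (A.trace_rot dy dx dy dy dx).trans e_xyyxy
  have e_yyyyx : Matrix.trace (θ₂ * θ₂ * θ₂ * θ₂ * θ₁) =
      Matrix.trace (θ₁ * θ₂ * θ₂ * θ₂ * θ₂) :=
    (A.trace_rot dy dy dy dy dx).trans e_yyyxy
  rw [htr, map_smul, A.pd_trace, mpd_lin]
  have q1 : A.mpd (θ₁ ^ 3 * θ₂) = θ₁ * θ₁ * θ₁ * θ₁ * θ₂ + θ₁ * θ₁ * θ₁ * θ₂ * θ₂ := by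
    have : θ₁ ^ 3 * θ₂ = θ₁ * (θ₁ * (θ₁ * θ₂)) := by noncomm_ring
    rw [this, A.mpd_mul dx, A.mpd_mul dx, A.mpd_mul dx, sx, sy]
    simp only [add_zero, pow_one, neg_smul, one_smul]
    noncomm_ring
  have q2 : A.mpd (θ₁ * θ₂ ^ 3) = θ₁ * θ₁ * θ₂ * θ₂ * θ₂ + θ₁ * θ₂ * θ₂ * θ₂ * θ₂ := by
    have : θ₁ * θ₂ ^ 3 = θ₁ * (θ₂ * (θ₂ * θ₂)) := by noncomm_ring
    rw [this, A.mpd_mul dx, A.mpd_mul dy, A.mpd_mul dy, sx, sy]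
    simp only [add_zero, pow_one, neg_smul, one_smul]
    noncomm_ring
  have q3 : A.mpd ((θ₁ * θ₂) ^ 2) = θ₁ * θ₁ * θ₂ * θ₁ * θ₂ + θ₁ * θ₂ * θ₂ * θ₁ * θ₂
      + θ₁ * θ₂ * θ₁ * θ₁ * θ₂ + θ₁ * θ₂ * θ₁ * θ₂ * θ₂ := by
    have : (θ₁ * θ₂) ^ 2 = θ₁ * (θ₂ * (θ₁ * θ₂)) := by noncomm_ring
    rw [this, A.mpd_mul dx, A.mpd_mul dy, A.mpd_mul dx, sx, sy]
    simp only [add_zero, pow_one, neg_smul, one_smul]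
    noncomm_ring
  rw [q1, q2, q3]
  simp only [pow_succ, pow_zero, one_mul, mul_add, add_mul, ← mul_assoc, Matrix.trace_add,
    Matrix.trace_smul]
  simp only [tx, ty,
    e_yxxxx, e_yxxxy, e_yxxyx, e_yxxyy, e_yxyxy, e_yxyyy, e_xyxxx, e_xyxxy,
    e_yyxxx, e_yyxxy, e_yyxyx, e_yyxyy, e_xxyxx, e_xyyxx, e_xyyxy, e_yxyxx,
    e_yyyxx, e_yyyxy, e_xxxyx, e_xxyyx, e_xyxyx, e_xyyyx, e_yxyyx, e_yyyyx]
  module
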